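/- arXiv:2602.16903 — 6 statements merged into one kernel-verified Lean document; each statement's English description precedes it below -/
import Mathlib

section
/- Let ι and α be types, let M : ℕ → ι → α, and let a ≤ b be natural numbers. Assume there exist t₀ with a ≤ t₀ ≤ b and k₀ : ι such that: (i) for every s with a ≤ s ≤ b, if s < t₀ then M s = M a, and if t₀ ≤ s then M s = M t₀; and (ii) M t₀ k = M a k for every k ≠ k₀ (i.e., within [a,b] the array changes at most once, at time t₀, and only in entry k₀). Then every collect with read times in [a,b] is a snapshot over [a,b]: for every c : ι → ℕ with a ≤ c k ≤ b for all k, there exists t with a ≤ t ≤ b such that M (c k) k = M t k for all k. -/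
/-- If, within the interval `[a,b]`, the array `M` changes at most once
(at time `t₀`, and only in entry `k₀`), then every collect with read times
in `[a,b]` is a snapshot over `[a,b]`. -/
theorem collect_is_snapshot_of_at_most_one_change
    {ι α : Type*} (M : ℕ → ι → α) (a b : ℕ) (hab : a ≤ b)
    (h : ∃ t₀, a ≤ t₀ ∧ t₀ ≤ b ∧ ∃ k₀ : ι,
      (∀ s, a ≤ s → s ≤ b → (s < t₀ → M s = M a) ∧ (t₀ ≤ s → M s = M t₀)) ∧
      (∀ k, k ≠ k₀ → M t₀ k = M a k)) :
    ∀ c : ι → ℕ, (∀ k, a ≤ c k ∧ c k ≤ b) →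
      ∃ t, a ≤ t ∧ t ≤ b ∧ ∀ k, M (c k) k = M t k := by
  obtain ⟨t₀, -, -, k₀, hM, hk⟩ := h
  intro c hc
  have key : ∀ s, a ≤ s → s ≤ b → ∀ k, k ≠ k₀ → M s k = M a k := by
    intro s has hsb k hne
    rcases lt_or_ge s t₀ with hs | hs
    · rw [(hM s has hsb).1 hs]
    · rw [(hM s has hsb).2 hs, hk k hne]
  refine ⟨c k₀, (hc k₀).1, (hc k₀).2, fun k => ?_⟩
  by_cases hne : k = k₀
  · rw [hne]
  · rw [key _ (hc k).1 (hc k).2 k hne, key _ (hc k₀).1 (hc k₀).2 k hne]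
end

section
/- Let f : ℕ → ℕ be monotone and let P : ℕ → Prop satisfy the counter invariants (inv1) and (inv2). If a ≤ b and f b ≤ f a + 1, then there is at most one modification time in [a,b]: for all s, t with a ≤ s ≤ b, a ≤ t ≤ b, P s and P t, one has s = t. -/
/-- If two reads of the counter differ by at most one, the shared array is
modified at most once in between. -/
theorem at_most_one_modification
    (f : ℕ → ℕ) (hf : Monotone f) (P : ℕ → Prop)
    (inv1 : ∀ t, P t → Odd (f t))
    (inv2 : ∀ s t, P s → P t → f s = f t → s = t)
    (a b : ℕ) (hab : a ≤ b) (hfb : f b ≤ f a + 1) :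
    ∀ s t, a ≤ s → s ≤ b → a ≤ t → t ≤ b → P s → P t → s = t := by
  intro s t has hsb hat htb hs ht
  obtain ⟨k, hk⟩ := inv1 s hs
  obtain ⟨l, hl⟩ := inv1 t ht
  have := hf has
  have := hf hsb
  have := hf hat
  have := hf htb
  exact inv2 s t hs ht (by omega)
end

section
/- Let M : ℕ → ι → α and let f : ℕ → ℕ be monotone. Assume: (i) every change of M is single-entry; (ii) every change time t of M satisfies Odd (f t); (iii) if s and t are change times of M with f s = f t, then s = t. If a ≤ b and f b ≤ f a + 1, then every collect with read times in [a,b] is a snapshot over [a,b]: for every c : ι → ℕ with a ≤ c k ≤ b for all k, there exists t with a ≤ t ≤ b such that M (c k) k = M t k for all k. -/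
/-- A sequence with no change in `[a, b)` is constant on `[a, b]`. -/
theorem eq_left_of_forall_succ_eq {β : Type*} {x : ℕ → β} {a b : ℕ}
    (h : ∀ t, a ≤ t → t < b → x (t + 1) = x t) {u : ℕ} (hau : a ≤ u) (hub : u ≤ b) :
    x u = x a := by
  induction u, hau using Nat.le_induction with
  | base => rfl
  | succ n hn ih => rw [h n hn hub, ih (Nat.le_of_succ_le hub)]

/-- If all changes happen at odd values of a monotone counter, at most once per value, then at most
one change happens while the counter grows by at most one. -/
theorem change_time_unique {β : Type*} {x : ℕ → β} {f : ℕ → ℕ} (hf : Monotone f)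
    (hodd : ∀ t, x (t + 1) ≠ x t → Odd (f t))
    (hinj : ∀ s t, x (s + 1) ≠ x s → x (t + 1) ≠ x t → f s = f t → s = t)
    {a b : ℕ} (hfb : f b ≤ f a + 1) {s t : ℕ} (has : a ≤ s) (hsb : s ≤ b) (hat : a ≤ t)
    (htb : t ≤ b) (hs : x (s + 1) ≠ x s) (ht : x (t + 1) ≠ x t) : s = t := by
  refine hinj s t hs ht ?_
  obtain ⟨m, hm⟩ := hodd s hs
  obtain ⟨n, hn⟩ := hodd t ht
  have := hf has
  have := hf hsb
  have := hf hat
  have := hf htb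
  omega

/-- Correctness of the termination test of the solo-updater Scan (line A13):
if two reads of the counter `f` sandwiching a collect differ by at most one,
then the collect is a snapshot. -/
theorem solo_updater_scan_correct
    {ι α : Type*} (M : ℕ → ι → α) (f : ℕ → ℕ) (hf : Monotone f)
    (hsingle : ∀ t, M (t + 1) ≠ M t → ∃ k₀ : ι, ∀ k, k ≠ k₀ → M (t + 1) k = M t k)
    (hodd : ∀ t, M (t + 1) ≠ M t → Odd (f t))
    (hinj : ∀ s t, M (s + 1) ≠ M s → M (t + 1) ≠ M t → f s = f t → s = t)
    (a b : ℕ) (hab : a ≤ b) (hfb : f b ≤ f a + 1) :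
    ∀ c : ι → ℕ, (∀ k, a ≤ c k ∧ c k ≤ b) →
      ∃ t, a ≤ t ∧ t ≤ b ∧ ∀ k, M (c k) k = M t k := by
  intro c hc
  by_cases hchange : ∃ s, a ≤ s ∧ s < b ∧ M (s + 1) ≠ M s
  · obtain ⟨s, has, hsb, hs⟩ := hchange
    obtain ⟨k₀, hk₀⟩ := hsingle s hs
    refine ⟨c k₀, (hc k₀).1, (hc k₀).2, fun k => ?_⟩
    by_cases hk : k = k₀
    · rw [hk]
    have hconst : ∀ t, a ≤ t → t < b → M (t + 1) k = M t k := by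
      intro t hat htb
      by_cases ht : M (t + 1) = M t
      · rw [ht]
      · obtain rfl := change_time_unique hf hodd hinj hfb has hsb.le hat htb.le hs ht
        exact hk₀ k hk
    exact (eq_left_of_forall_succ_eq (x := fun t => M t k) hconst (hc k).1 (hc k).2).trans
      (eq_left_of_forall_succ_eq (x := fun t => M t k) hconst (hc k₀).1 (hc k₀).2).symm
  · push Not at hchange
    exact ⟨a, le_rfl, hab, fun k =>
      congrFun (eq_left_of_forall_succ_eq hchange (hc k).1 (hc k).2) k⟩
end

section
/- Let J be a finite set of process indices (a Finset in a type ι'), and for each j let f j : ℕ → ℕ be monotone and P j : ℕ → Prop satisfy the counter invariants (inv1) and (inv2). Let a ≤ b be such that f j b ≤ f j a + 1 for every j ∈ J. Then the number of modification events in [a,b], i.e., the cardinality of the set of pairs {(j,t) : j ∈ J, a ≤ t ≤ b, P j t}, is at most the cardinality of {j ∈ J : ¬(f j a = f j b ∧ Even (f j a))}. -/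
/-- Justification of line B14 of the concurrent-updater algorithm: when every
process's counter increases by at most one over `[a,b]`, the number of
modification events in `[a,b]` is bounded by the number of processes whose two
counter reads are not equal-and-even. -/
theorem modification_events_le
    {ι' : Type*} (J : Finset ι') (f : ι' → ℕ → ℕ) (P : ι' → ℕ → Prop)
    (hf : ∀ j ∈ J, Monotone (f j))
    (inv1 : ∀ j ∈ J, ∀ t, P j t → Odd (f j t))
    (inv2 : ∀ j ∈ J, ∀ s t, P j s → P j t → f j s = f j t → s = t)
    (a b : ℕ) (hab : a ≤ b)
    (hbound : ∀ j ∈ J, f j b ≤ f j a + 1) :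
    Set.ncard {p : ι' × ℕ | p.1 ∈ J ∧ a ≤ p.2 ∧ p.2 ≤ b ∧ P p.1 p.2} ≤
      Set.ncard {j : ι' | j ∈ J ∧ ¬ (f j a = f j b ∧ Even (f j a))} := by
  refine Set.ncard_le_ncard_of_injOn Prod.fst ?_ ?_ (J.finite_toSet.subset fun j hj => hj.1)
  · rintro ⟨j, t⟩ ⟨hj, hat, htb, hP⟩
    refine ⟨hj, fun ⟨heq, heven⟩ => ?_⟩
    have hlo : f j a ≤ f j t := hf j hj hat
    have hhi : f j t ≤ f j b := hf j hj htb
    have hta : f j t = f j a := le_antisymm (hhi.trans heq.ge) hlo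
    exact Nat.not_even_iff_odd.mpr (inv1 j hj t hP) (hta ▸ heven)
  · rintro ⟨j, s⟩ ⟨hj, has, hsb, hPs⟩ ⟨k, t⟩ ⟨-, hat, htb, hPt⟩ hjk
    obtain rfl : j = k := hjk
    have hlos : f j a ≤ f j s := hf j hj has
    have hhis : f j s ≤ f j b := hf j hj hsb
    have hlot : f j a ≤ f j t := hf j hj hat
    have hhit : f j t ≤ f j b := hf j hj htb
    have hstep := hbound j hj
    obtain ⟨m, hm⟩ := inv1 j hj s hPs
    obtain ⟨n, hn⟩ := inv1 j hj t hPt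
    rw [inv2 j hj s t hPs hPt (by omega)]
end

section
/- Let J be a finite set of process indices, and for each j let f j : ℕ → ℕ be monotone and P j : ℕ → Prop satisfy the counter invariants (inv1) and (inv2). Let a ≤ b ≤ c be such that f j b ≤ f j a + 1 and f j c = f j b for every j ∈ J. Then the number of modification events in the extended interval [a,c], i.e., the cardinality of {(j,t) : j ∈ J, a ≤ t ≤ c, P j t}, is at most the cardinality of {j ∈ J : ¬(f j a = f j b ∧ Even (f j a))}. -/
/-- Justification of lines B19–B20 of the concurrent-updater algorithm: since
the second and third collects of the counters are equal (`f j c = f j b`), the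
bound `ℓ` still upper-bounds the number of modification events over the
extended interval `[a,c]`. -/
theorem modification_events_le_extended
    {ι' : Type*} (J : Finset ι') (f : ι' → ℕ → ℕ) (P : ι' → ℕ → Prop)
    (hf : ∀ j ∈ J, Monotone (f j))
    (inv1 : ∀ j ∈ J, ∀ t, P j t → Odd (f j t))
    (inv2 : ∀ j ∈ J, ∀ s t, P j s → P j t → f j s = f j t → s = t)
    (a b c : ℕ) (hab : a ≤ b) (hbc : b ≤ c)
    (hbound : ∀ j ∈ J, f j b ≤ f j a + 1)
    (heq : ∀ j ∈ J, f j c = f j b) :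
    Set.ncard {p : ι' × ℕ | p.1 ∈ J ∧ a ≤ p.2 ∧ p.2 ≤ c ∧ P p.1 p.2} ≤
      Set.ncard {j : ι' | j ∈ J ∧ ¬ (f j a = f j b ∧ Even (f j a))} := by
  refine Set.ncard_le_ncard_of_injOn Prod.fst ?_ ?_ (J.finite_toSet.subset fun j hj => hj.1)
  · rintro ⟨j, t⟩ ⟨hj, hat, htc, hP⟩
    refine ⟨hj, fun ⟨hfab, heven⟩ => ?_⟩
    have hta : f j t = f j a :=
      le_antisymm ((hf j hj htc).trans_eq ((heq j hj).trans hfab.symm)) (hf j hj hat)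
    exact Nat.not_even_iff_odd.mpr (inv1 j hj t hP) (hta ▸ heven)
  · rintro ⟨j, s⟩ ⟨hj, has, hsc, hPs⟩ ⟨k, t⟩ ⟨-, hat, htc, hPt⟩ rfl
    -- Both counter values are odd and lie in `{f j a, f j a + 1}`, so they agree.
    obtain ⟨m, hm⟩ := inv1 j hj s hPs
    obtain ⟨n, hn⟩ := inv1 j hj t hPt
    have hs₁ := hf j hj has
    have hs₂ := hf j hj hsc
    have ht₁ := hf j hj hat
    have ht₂ := hf j hj htc
    have hc := heq j hj
    have hb := hbound j hj
    dsimp only at *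
    rw [inv2 j hj s t hPs hPt (by omega)]
end

section
/- Let M : ℕ → ι → α be such that every change of M is single-entry. Let ℓ be a natural number, set r = ⌊ℓ/2⌋ + 1, and let u : Fin (r+1) → ℕ be monotone (u 0 ≤ u 1 ≤ ... ≤ u r). For each i : Fin r let cᵢ : ι → ℕ satisfy u i ≤ cᵢ k ≤ u (i+1) for all k (the r collects are taken in consecutive windows). Assume: (a) the set of change times t of M with u 0 ≤ t < u r has at most ℓ elements; and (b) all r collects return the same array v : ι → α, i.e., M (cᵢ k) k = v k for all i and k. Then v is a snapshot: there exists t with u 0 ≤ t ≤ u r such that v k = M t k for all k. -/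
/-- A function on `ℕ` that is unchanged by every step inside `[a, b)` is constant on `[a, b]`. -/
theorem eq_of_step_eq_on_Ico {β : Type*} {f : ℕ → β} {a b : ℕ}
    (h : ∀ t, a ≤ t → t < b → f (t + 1) = f t) {s t : ℕ}
    (hs : a ≤ s ∧ s ≤ b) (ht : a ≤ t ∧ t ≤ b) : f s = f t := by
  have key : ∀ x, a ≤ x → x ≤ b → f x = f a := by
    intro x hx
    induction x, hx using Nat.le_induction with
    | base => exact fun _ => rfl
    | succ n hn ih => exact fun hb => (h n hn hb).trans (ih (by omega))
  rw [key s hs.1 hs.2, key t ht.1 ht.2]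

/-- If each of the consecutive windows cut out by a monotone `u` contains at least `m` elements
satisfying `p`, then the first `j` windows together contain at least `m * j` of them. -/
theorem mul_le_card_filter_Ico_of_windows (p : ℕ → Prop) [DecidablePred p] {n m : ℕ}
    {u : Fin (n + 1) → ℕ} (hu : Monotone u)
    (h : ∀ i : Fin n, m ≤ ((Finset.Ico (u i.castSucc) (u i.succ)).filter p).card)
    (j : Fin (n + 1)) : m * j ≤ ((Finset.Ico (u 0) (u j)).filter p).card := by
  induction j using Fin.induction with
  | zero => simp
  | succ i ih =>
    rw [← Finset.Ico_union_Ico_eq_Ico (hu (Fin.zero_le i.castSucc)) (hu i.castSucc_le_succ),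
      Finset.filter_union, Finset.card_union_of_disjoint
        (Finset.disjoint_filter_filter (Finset.Ico_disjoint_Ico_consecutive _ _ _)),
      Fin.val_succ, mul_add_one]
    exact add_le_add ih (h i)

/-- A collect during whose window the array undergoes at most one change, that change being
single-entry, returns the state of the array at some time in the window. -/
theorem exists_snapshot_of_changes_subsingleton {ι α : Type*} {M : ℕ → ι → α}
    (hsingle : ∀ t, M (t + 1) ≠ M t → ∃ k₀ : ι, ∀ k, k ≠ k₀ → M (t + 1) k = M t k)
    {a b : ℕ} (hab : a ≤ b) {c : ι → ℕ} (hc : ∀ k, a ≤ c k ∧ c k ≤ b)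
    (hsub : {t | M (t + 1) ≠ M t ∧ a ≤ t ∧ t < b}.Subsingleton) :
    ∃ t, a ≤ t ∧ t ≤ b ∧ ∀ k, M (c k) k = M t k := by
  by_cases hchange : ∃ t, M (t + 1) ≠ M t ∧ a ≤ t ∧ t < b
  · obtain ⟨t₀, ht₀⟩ := hchange
    obtain ⟨k₀, hk₀⟩ := hsingle t₀ ht₀.1
    refine ⟨c k₀, (hc k₀).1, (hc k₀).2, fun k => ?_⟩
    by_cases hk : k = k₀
    · rw [hk]
    · refine eq_of_step_eq_on_Ico (f := fun t => M t k) (fun t hat htb => ?_) (hc k) (hc k₀)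
      by_cases ht : M (t + 1) = M t
      · exact congrFun ht k
      · rw [hsub ⟨ht, hat, htb⟩ ht₀]
        exact hk₀ k hk
  · push Not at hchange
    refine ⟨a, le_rfl, hab, fun k => congrFun ?_ k⟩
    refine eq_of_step_eq_on_Ico (fun t hat htb => ?_) (hc k) ⟨le_rfl, hab⟩
    by_contra ht
    exact absurd htb (hchange t ht hat).not_gt

/-- Core of the concurrent-updater Scan (lines B17–B20): if the array changes
at most `ℓ` times while `⌊ℓ/2⌋ + 1` consecutive collects all returning the same
array `v` are taken, then `v` is a snapshot. -/
theorem equal_collects_are_snapshot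
    {ι α : Type*} (M : ℕ → ι → α)
    (hsingle : ∀ t, M (t + 1) ≠ M t → ∃ k₀ : ι, ∀ k, k ≠ k₀ → M (t + 1) k = M t k)
    (ℓ : ℕ) (u : Fin (ℓ / 2 + 1 + 1) → ℕ) (hu : Monotone u)
    (c : Fin (ℓ / 2 + 1) → ι → ℕ)
    (hc : ∀ (i : Fin (ℓ / 2 + 1)) (k : ι),
      u i.castSucc ≤ c i k ∧ c i k ≤ u i.succ)
    (hchanges :
      Set.ncard {t : ℕ | M (t + 1) ≠ M t ∧ u 0 ≤ t ∧ t < u (Fin.last _)} ≤ ℓ)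
    (v : ι → α)
    (hv : ∀ (i : Fin (ℓ / 2 + 1)) (k : ι), M (c i k) k = v k) :
    ∃ t, u 0 ≤ t ∧ t ≤ u (Fin.last _) ∧ ∀ k, v k = M t k := by
  classical
  obtain ⟨i, hi⟩ : ∃ i : Fin (ℓ / 2 + 1),
      ((Finset.Ico (u i.castSucc) (u i.succ)).filter fun t => M (t + 1) ≠ M t).card < 2 := by
    by_contra! h
    have hcard := mul_le_card_filter_Ico_of_windows _ hu h (Fin.last _)
    have hset : {t : ℕ | M (t + 1) ≠ M t ∧ u 0 ≤ t ∧ t < u (Fin.last _)} =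
        ((Finset.Ico (u 0) (u (Fin.last _))).filter fun t => M (t + 1) ≠ M t) := by
      ext t
      simp [and_comm]
    rw [hset, Set.ncard_coe_finset] at hchanges
    rw [Fin.val_last] at hcard
    omega
  obtain ⟨t, hat, htb, ht⟩ := exists_snapshot_of_changes_subsingleton hsingle
    (hu i.castSucc_le_succ) (hc i) (fun s hs t ht =>
      Finset.card_le_one.mp (Nat.le_of_lt_succ hi) s
        (Finset.mem_filter.mpr ⟨Finset.mem_Ico.mpr hs.2, hs.1⟩) t
        (Finset.mem_filter.mpr ⟨Finset.mem_Ico.mpr ht.2, ht.1⟩))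
  exact ⟨t, (hu (Fin.zero_le _)).trans hat, htb.trans (hu (Fin.le_last _)),
    fun k => (hv i k).symm.trans (ht k)⟩
end
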